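/- In the ring of symmetric functions $\Lambda$ with power sums $p_n$ and the adjoint operators $p_n^\perp = n\,\partial/\partial p_n$, the vertex operator coefficients $Q_m^* = [w^m]\exp(\sum_{n\geq 1}\frac{1-q^n}{n}p_n^\perp w^n)$ and $Q_n = [z^n]\exp(\sum_{k\geq 1}\frac{1-t^k}{k}p_k z^k)$ satisfy the commutation relation $[Q_m^*, Q_n] = (1-q)(1-t)\sum_{i=1}^{\min(m,n)}\sum_{j=0}^{\min(m,n)-i}(qt)^j\, Q_{n-i-j}\,Q^*_{m-i-j}$. -/

import Mathlib

open MvPolynomial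

variable {F : Type*} [Field F] [CharZero F]

/-- Coefficients `Q_n` of `Q(z) = exp(∑_{k≥1} (1-t^k)/k · p_k z^k)` in the ring of
symmetric functions (modelled as `MvPolynomial ℕ+ F`, the variable `m : ℕ+` being
the power sum `p_m`), via the recursion `(n+1) Q_{n+1} = ∑_{k=1}^{n+1} (1-t^k) p_k Q_{n+1-k}`. -/
noncomputable def Qcoef (t : F) : ℕ → MvPolynomial ℕ+ F
  | 0 => 1
  | n + 1 =>
      MvPolynomial.C (((n : F) + 1)⁻¹) *
        ∑ k ∈ Finset.range (n + 1),
          MvPolynomial.C (1 - t ^ (k + 1)) * MvPolynomial.X k.succPNat *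
            Qcoef t (n - k)
  decreasing_by exact Nat.lt_succ_of_le (Nat.sub_le n k)

/-- The adjoint `p_m^⊥ = m ∂/∂p_m` of multiplication by the power sum `p_m`. -/
noncomputable def pperp (m : ℕ+) : MvPolynomial ℕ+ F →ₗ[F] MvPolynomial ℕ+ F :=
  ((m : ℕ) : F) • (MvPolynomial.pderiv m).toLinearMap

/-- Coefficients `Q*_n` of `Q*(w) = exp(∑_{k≥1} (1-q^k)/k · p_k^⊥ w^k)`, via the
same recursion (the operators `p_k^⊥` commute). -/
noncomputable def QstarOp (q : F) : ℕ → (MvPolynomial ℕ+ F →ₗ[F] MvPolynomial ℕ+ F)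
  | 0 => LinearMap.id
  | n + 1 =>
      (((n : F) + 1)⁻¹) •
        ∑ k ∈ Finset.range (n + 1),
          (1 - q ^ (k + 1)) • ((pperp k.succPNat) ∘ₗ QstarOp q (n - k))
  decreasing_by exact Nat.lt_succ_of_le (Nat.sub_le n k)

/-- Multiplication by a symmetric function, as a linear operator. -/
noncomputable def mulOp (f : MvPolynomial ℕ+ F) :
    MvPolynomial ℕ+ F →ₗ[F] MvPolynomial ℕ+ F :=
  LinearMap.mulLeft F f

/-!
Everything is governed by linear differential equations for formal power series, whose solutions
are determined by their constant coefficients. Write `A` for the ring of symmetric functions.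
For each `f`, the series `Q*(w) f` solves `u' = D(w) u`, where `D(w) = ∑ (1 - q^i) p_i^⊥ w^(i-1)`
is a derivation of `A⟦w⟧`. Hence `Q*(w) f · Q*(w) g` solves the same equation as `Q*(w) (f g)`, so
`Q*(w)` is multiplicative and only its action on the `Q_n` matters. The operator `p_s^⊥`
multiplies `Q(z)` by `(1 - t^s) z^s`, so `Q*(w)` multiplies `Q(z)` by the series `c` in `w z` with
`c(0) = 1` and `c'(x) = (∑ (1 - q^i) (1 - t^i) x^(i-1)) c(x)`, which is
`c(x) = (1 - q x) (1 - t x) / ((1 - x) (1 - q t x))`.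
-/

open Finset hiding mem_antidiagonal
open Finset.HasAntidiagonal
open scoped PowerSeries

theorem sum_antidiagonal_left_comm {ι M : Type*} [AddCommMonoid ι] [HasAntidiagonal ι]
    [AddCommMonoid M] (n : ι) (f : ι → ι → ι → M) :
    ∑ x ∈ antidiagonal n, ∑ y ∈ antidiagonal x.2, f x.1 y.1 y.2 =
      ∑ x ∈ antidiagonal n, ∑ y ∈ antidiagonal x.2, f y.1 x.1 y.2 := by
  simp only [sum_sigma']
  refine sum_nbij' (fun ⟨⟨i, _⟩, ⟨j, k⟩⟩ ↦ ⟨(j, i + k), (i, k)⟩)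
    (fun ⟨⟨i, _⟩, ⟨j, k⟩⟩ ↦ ⟨(j, i + k), (i, k)⟩) ?_ ?_ ?_ ?_ ?_
  all_goals
    simp only [Sigma.forall, Prod.forall, mem_sigma, mem_antidiagonal]
    rintro _ _ _ _ ⟨rfl, rfl⟩
    simp [add_left_comm]

theorem sum_Icc_sum_range_add {M : Type*} [AddCommMonoid M] (N : ℕ) (f : ℕ → ℕ → M) :
    ∑ i ∈ Icc 1 N, ∑ j ∈ range (N - i + 1), f (i + j) j =
      ∑ k ∈ range N, ∑ j ∈ range (k + 1), f (k + 1) j := by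
  simp only [sum_sigma']
  refine sum_nbij' (fun x ↦ ⟨x.1 + x.2 - 1, x.2⟩) (fun x ↦ ⟨x.1 + 1 - x.2, x.2⟩) ?_ ?_ ?_ ?_ ?_
  all_goals
    rintro ⟨i, j⟩ h
    simp only [mem_sigma, mem_Icc, mem_range] at h ⊢
  · omega
  · omega
  · rw [Nat.sub_add_cancel (by omega), Nat.add_sub_cancel]
  · rw [Nat.sub_add_cancel (by omega), Nat.add_sub_cancel]
  · rw [Nat.sub_add_cancel (by omega)]

section FormalODE

section CommSemiring

variable {A : Type*} [CommSemiring A]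

/-- The hypothesis `hL` lets the equation `f' = L f` be solved one coefficient at a time. -/
theorem eq_of_derivative_eq [IsAddTorsionFree A] {L : A⟦X⟧ → A⟦X⟧}
    (hL : ∀ f g n, (∀ k ≤ n, f.coeff k = g.coeff k) → (L f).coeff n = (L g).coeff n)
    {f g : A⟦X⟧} (h₀ : f.constantCoeff = g.constantCoeff)
    (hf : d⁄dX A f = L f) (hg : d⁄dX A g = L g) : f = g := by
  ext n
  induction n using Nat.strong_induction_on with
  | _ n ih =>
    cases n with
    | zero => simpa using h₀
    | succ n =>
      have hderiv : (d⁄dX A f).coeff n = (d⁄dX A g).coeff n := by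
        rw [hf, hg, hL f g n fun k hk ↦ ih k (Nat.lt_succ_of_le hk)]
      simp only [PowerSeries.coeff_derivative, mul_comm _ ((n : A) + 1)] at hderiv
      refine nsmul_right_injective n.succ_ne_zero ?_
      simpa using hderiv

theorem coeff_mul_congr {f g : A⟦X⟧} {n : ℕ} (h : A⟦X⟧)
    (hfg : ∀ k ≤ n, f.coeff k = g.coeff k) : (h * f).coeff n = (h * g).coeff n := by
  simp only [PowerSeries.coeff_mul]
  exact sum_congr rfl fun x hx ↦ by rw [hfg _ (antidiagonal.snd_le hx)]

theorem derivative_mul_of_derivative_eq_mul {f g u v : A⟦X⟧}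
    (hf : d⁄dX A f = u * f) (hg : d⁄dX A g = v * g) :
    d⁄dX A (f * g) = (u + v) * (f * g) := by
  rw [Derivation.leibniz, hf, hg, smul_eq_mul, smul_eq_mul]
  ring

theorem coeff_derivative_eq_smul (R : Type*) [CommSemiring R] [Algebra R A] (f : A⟦X⟧)
    (n : ℕ) : (d⁄dX A f).coeff n = ((n : R) + 1) • f.coeff (n + 1) := by
  rw [PowerSeries.coeff_derivative, Algebra.smul_def, mul_comm, map_add, map_natCast, map_one]

end CommSemiring

variable {R A : Type*} [CommRing R] [CommRing A] [Algebra R A]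

/-- The derivation `∑ D_i wⁱ` of `A⟦w⟧`, where each derivation `D_i` of `A` acts on coefficients. It
is the right-hand side of the linear differential equations considered here. -/
noncomputable def derivationSeries (D : ℕ → Derivation R A A) : Derivation R A⟦X⟧ A⟦X⟧ :=
  Derivation.mk'
    { toFun f := PowerSeries.mk fun n ↦ ∑ x ∈ antidiagonal n, D x.1 (f.coeff x.2)
      map_add' f g := by ext; simp [sum_add_distrib]
      map_smul' r f := by ext; simp [smul_sum] }
    fun f g ↦ by
      have sum_mul_eq_mul_sum (n : ℕ) (f g : A⟦X⟧) :
          ∑ x ∈ antidiagonal n, ∑ y ∈ antidiagonal x.2, f.coeff y.1 * D x.1 (g.coeff y.2) =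
            ∑ x ∈ antidiagonal n, f.coeff x.1 * ∑ y ∈ antidiagonal x.2, D y.1 (g.coeff y.2) := by
        rw [sum_antidiagonal_left_comm n fun i j k ↦ f.coeff j * D i (g.coeff k)]
        simp only [mul_sum]
      ext n
      simp only [LinearMap.coe_mk, AddHom.coe_mk, PowerSeries.coeff_mk, PowerSeries.coeff_mul,
        map_sum, Derivation.leibniz, smul_eq_mul, sum_add_distrib, map_add, ← sum_mul_eq_mul_sum]
      congr 1
      exact sum_congr rfl fun x _ ↦ Nat.sum_antidiagonal_swap
        (f := fun y ↦ g.coeff y.1 * D x.1 (f.coeff y.2))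

theorem coeff_derivationSeries (D : ℕ → Derivation R A A) (f : A⟦X⟧) (n : ℕ) :
    (derivationSeries D f).coeff n = ∑ x ∈ antidiagonal n, D x.1 (f.coeff x.2) :=
  PowerSeries.coeff_mk n fun n ↦ ∑ x ∈ antidiagonal n, D x.1 (f.coeff x.2)

/-- The extension of a derivation `D` of `A` to `A⟦X⟧` acting on each coefficient, encoded as the
series of derivations with constant term `D`. It lets `p_m^⊥` act on the generating series
`Q(z)`. -/
noncomputable def coeffwiseDerivation (D : Derivation R A A) : Derivation R A⟦X⟧ A⟦X⟧ :=
  derivationSeries (Pi.single 0 D)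

theorem coeff_coeffwiseDerivation (D : Derivation R A A) (f : A⟦X⟧) (n : ℕ) :
    (coeffwiseDerivation D f).coeff n = D (f.coeff n) := by
  rw [coeffwiseDerivation, coeff_derivationSeries, sum_eq_single (0, n)]
  · simp
  · rintro ⟨i, j⟩ hij hne
    have hi : i ≠ 0 := by rintro rfl; simp_all
    simp [hi]
  · simp

theorem eq_of_derivative_eq_derivationSeries [IsAddTorsionFree A] {D : ℕ → Derivation R A A}
    {f g : A⟦X⟧} (h₀ : f.constantCoeff = g.constantCoeff)
    (hf : d⁄dX A f = derivationSeries D f) (hg : d⁄dX A g = derivationSeries D g) : f = g := by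
  refine eq_of_derivative_eq (fun f g n hfg ↦ ?_) h₀ hf hg
  simp only [coeff_derivationSeries]
  exact sum_congr rfl fun x hx ↦ by rw [hfg _ (antidiagonal.snd_le hx)]

theorem coeffwiseDerivation_X_pow (D : Derivation R A A) (k : ℕ) :
    coeffwiseDerivation D (PowerSeries.X ^ k) = 0 := by
  ext n
  rw [coeff_coeffwiseDerivation, PowerSeries.coeff_X_pow]
  split_ifs <;> simp

theorem derivative_coeffwiseDerivation (D : Derivation R A A) (f : A⟦X⟧) :
    d⁄dX A (coeffwiseDerivation D f) = coeffwiseDerivation D (d⁄dX A f) := by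
  ext n
  rw [coeff_coeffwiseDerivation, PowerSeries.coeff_derivative,
    PowerSeries.coeff_derivative, coeff_coeffwiseDerivation]
  have hD : D ((n : A) + 1) = 0 := by simp
  rw [D.leibniz, hD, smul_zero, zero_add, smul_eq_mul, mul_comm]

end FormalODE

section ExchangeSeries

variable {R : Type*} [CommRing R] (a q t : R)

/-- The geometric series `1 / (1 - a x)`, defined by its coefficients so that `a` may lie in any
ring. -/
noncomputable def geomSeries : R⟦X⟧ :=
  PowerSeries.mk fun n ↦ a ^ n

/-- The exchange factor `(1 - q x) (1 - t x) / ((1 - x) (1 - q t x))` relating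
`Q*(w) Q(z)` to `Q(z) Q*(w)` with `x = w z`; in the relation for `Q(z⁻¹)` it appears with
`x = w / z`. -/
noncomputable def exchangeSeries : R⟦X⟧ :=
  (1 - PowerSeries.C q * PowerSeries.X) * (1 - PowerSeries.C t * PowerSeries.X) *
    (geomSeries 1 * geomSeries (q * t))

theorem geomSeries_mul_one_sub :
    geomSeries a * (1 - PowerSeries.C a * PowerSeries.X) = 1 := by
  simpa [geomSeries, PowerSeries.rescale_mk] using
    congrArg (PowerSeries.rescale a) (PowerSeries.mk_one_mul_one_sub_eq_one R)

theorem derivative_one_sub_C_mul_X :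
    d⁄dX R (1 - PowerSeries.C a * PowerSeries.X) =
      -(PowerSeries.C a * geomSeries a) * (1 - PowerSeries.C a * PowerSeries.X) := by
  rw [neg_mul, mul_assoc, geomSeries_mul_one_sub]
  simp

theorem derivative_geomSeries :
    d⁄dX R (geomSeries a) = PowerSeries.C a * geomSeries a * geomSeries a := by
  have h := congrArg (d⁄dX R) (geomSeries_mul_one_sub a)
  rw [Derivation.leibniz, derivative_one_sub_C_mul_X, smul_eq_mul, smul_eq_mul,
    Derivation.map_one_eq_zero] at h
  linear_combination geomSeries a * h -
    (d⁄dX R (geomSeries a) - PowerSeries.C a * geomSeries a ^ 2) * geomSeries_mul_one_sub a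

theorem derivative_exchangeSeries :
    d⁄dX R (exchangeSeries q t) =
      (PowerSeries.mk fun i ↦ (1 - q ^ (i + 1)) * (1 - t ^ (i + 1))) * exchangeSeries q t := by
  have hlog : (PowerSeries.mk fun i ↦ (1 - q ^ (i + 1)) * (1 - t ^ (i + 1))) =
      -(PowerSeries.C q * geomSeries q) + -(PowerSeries.C t * geomSeries t) +
        (PowerSeries.C 1 * geomSeries 1 + PowerSeries.C (q * t) * geomSeries (q * t)) := by
    ext n
    simp only [geomSeries, map_add, map_neg, PowerSeries.coeff_C_mul, PowerSeries.coeff_mk]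
    ring
  rw [hlog]
  exact derivative_mul_of_derivative_eq_mul
    (derivative_mul_of_derivative_eq_mul (derivative_one_sub_C_mul_X q)
      (derivative_one_sub_C_mul_X t))
    (derivative_mul_of_derivative_eq_mul (derivative_geomSeries 1) (derivative_geomSeries (q * t)))

theorem exchangeSeries_eq_one_add :
    exchangeSeries q t = 1 + PowerSeries.C ((1 - q) * (1 - t)) *
      (PowerSeries.X * (geomSeries (q * t) * geomSeries 1)) := by
  have h1 := geomSeries_mul_one_sub (1 : R)
  have hqt := geomSeries_mul_one_sub (q * t)
  simp only [exchangeSeries, map_mul, map_sub, map_one] at hqt h1 ⊢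
  linear_combination hqt + geomSeries (q * t) *
    (1 - PowerSeries.C q * PowerSeries.C t * PowerSeries.X) * h1

theorem constantCoeff_exchangeSeries : (exchangeSeries q t).constantCoeff = 1 := by
  simp [exchangeSeries_eq_one_add]

theorem coeff_succ_exchangeSeries (n : ℕ) :
    (exchangeSeries q t).coeff (n + 1) =
      (1 - q) * (1 - t) * ∑ j ∈ range (n + 1), (q * t) ^ j := by
  rw [exchangeSeries_eq_one_add, map_add, PowerSeries.coeff_C_mul, PowerSeries.coeff_succ_X_mul,
    PowerSeries.coeff_mul, Nat.sum_antidiagonal_eq_sum_range_succ_mk]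
  simp [geomSeries, PowerSeries.coeff_one]

end ExchangeSeries

section PowerSums

variable {R : Type*} [CommRing R]

/-- The logarithmic derivative `∑ (1 - t^(i+1)) p_(i+1) zⁱ` of `Q(z)`; the shift to index `i + 1`
is `Nat.succPNat`. -/
noncomputable def powerSumSeries (t : R) : (MvPolynomial ℕ+ R)⟦X⟧ :=
  PowerSeries.mk fun i ↦ (1 - t ^ (i + 1)) • X i.succPNat

/-- The adjoint `p_m^⊥ = m ∂/∂p_m`, that is `pperp m`, bundled as a derivation. -/
noncomputable def pperpDerivation (m : ℕ+) :
    Derivation R (MvPolynomial ℕ+ R) (MvPolynomial ℕ+ R) :=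
  ((m : ℕ) : R) • pderiv m

/-- The logarithmic derivative `D(w) = ∑ (1 - q^(i+1)) p_(i+1)^⊥ wⁱ` of the operator series `Q*(w)`,
as a derivation of the power series over the symmetric functions. -/
noncomputable def QstarLogDerivative (q : R) :
    Derivation R (MvPolynomial ℕ+ R)⟦X⟧ (MvPolynomial ℕ+ R)⟦X⟧ :=
  derivationSeries fun i ↦ (1 - q ^ (i + 1)) • pperpDerivation i.succPNat

theorem pperpDerivation_X_self (m : ℕ+) :
    pperpDerivation m (X m : MvPolynomial ℕ+ R) = C ((m : ℕ) : R) := by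
  simp [pperpDerivation, smul_eq_C_mul]

theorem pperpDerivation_X_of_ne {m k : ℕ+} (h : k ≠ m) :
    pperpDerivation m (X k : MvPolynomial ℕ+ R) = 0 := by
  simp [pperpDerivation, pderiv_X_of_ne h]

theorem coeffwise_pperp_powerSumSeries (t : R) (s : ℕ) :
    coeffwiseDerivation (pperpDerivation s.succPNat) (powerSumSeries t) =
      ((1 - t ^ (s + 1)) * ((s : R) + 1)) • PowerSeries.X ^ s := by
  ext1 n
  rw [coeff_coeffwiseDerivation, powerSumSeries, PowerSeries.coeff_mk, Derivation.map_smul,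
    PowerSeries.coeff_smul, PowerSeries.coeff_X_pow]
  split_ifs with h
  · rw [h, pperpDerivation_X_self, Nat.succPNat_coe, Nat.cast_succ, mul_smul]
    simp [smul_eq_C_mul]
  · rw [pperpDerivation_X_of_ne fun h' ↦ h (Nat.succPNat_injective h'), smul_zero, smul_zero]

end PowerSums

section VertexOperators

/-- The generating series `Q(z)` of the vertex operator coefficients `Q_n`, as a power series over
the symmetric functions. -/
noncomputable def Qseries (t : F) : (MvPolynomial ℕ+ F)⟦X⟧ :=
  PowerSeries.mk (Qcoef t)

/-- The generating series `Q*(w) f` for a symmetric function `f`; applying the operators to a fixed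
`f` keeps the series over a commutative ring. -/
noncomputable def QstarSeries (q : F) (f : MvPolynomial ℕ+ F) : (MvPolynomial ℕ+ F)⟦X⟧ :=
  PowerSeries.mk fun m ↦ QstarOp q m f

theorem derivative_Qseries (t : F) :
    d⁄dX (MvPolynomial ℕ+ F) (Qseries t) = powerSumSeries t * Qseries t := by
  ext1 n
  have hn : (n : F) + 1 ≠ 0 := n.cast_add_one_ne_zero
  rw [coeff_derivative_eq_smul F, PowerSeries.coeff_mul, Nat.sum_antidiagonal_eq_sum_range_succ_mk,
    Qseries, PowerSeries.coeff_mk, Qcoef, ← smul_eq_C_mul, smul_inv_smul₀ hn]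
  simp [powerSumSeries, smul_eq_C_mul]

theorem derivative_QstarSeries (q : F) (f : MvPolynomial ℕ+ F) :
    d⁄dX (MvPolynomial ℕ+ F) (QstarSeries q f) = QstarLogDerivative q (QstarSeries q f) := by
  ext1 n
  have hn : (n : F) + 1 ≠ 0 := n.cast_add_one_ne_zero
  rw [coeff_derivative_eq_smul F, QstarLogDerivative, coeff_derivationSeries,
    Nat.sum_antidiagonal_eq_sum_range_succ_mk, QstarSeries, PowerSeries.coeff_mk, QstarOp,
    LinearMap.smul_apply, smul_inv_smul₀ hn]
  simp [pperp, pperpDerivation]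

theorem QstarSeries_mul (q : F) (f g : MvPolynomial ℕ+ F) :
    QstarSeries q (f * g) = QstarSeries q f * QstarSeries q g := by
  have hderiv : d⁄dX (MvPolynomial ℕ+ F) (QstarSeries q f * QstarSeries q g) =
      QstarLogDerivative q (QstarSeries q f * QstarSeries q g) := by
    simp only [Derivation.leibniz, derivative_QstarSeries]
  refine eq_of_derivative_eq_derivationSeries ?_ (derivative_QstarSeries q _) hderiv
  simp [QstarSeries, QstarOp]

theorem coeffwise_pperp_Qseries (t : F) (s : ℕ) :
    coeffwiseDerivation (pperpDerivation s.succPNat) (Qseries t) =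
      (1 - t ^ (s + 1)) • (PowerSeries.X ^ (s + 1) * Qseries t) := by
  set D := coeffwiseDerivation (pperpDerivation (R := F) s.succPNat)
  refine eq_of_derivative_eq (L := fun f ↦ powerSumSeries t * f + D (powerSumSeries t) * Qseries t)
    (fun f g n hfg ↦ ?_) ?_ ?_ ?_
  · rw [map_add, map_add, coeff_mul_congr _ hfg]
  · rw [← PowerSeries.coeff_zero_eq_constantCoeff_apply, coeff_coeffwiseDerivation]
    simp [Qseries, Qcoef]
  · rw [derivative_coeffwiseDerivation, derivative_Qseries, D.leibniz, smul_eq_mul, smul_eq_mul,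
      mul_comm (Qseries t)]
  · have hX : d⁄dX (MvPolynomial ℕ+ F) (PowerSeries.X ^ (s + 1)) =
        ((s : F) + 1) • PowerSeries.X ^ s := by
      simp [Algebra.smul_def]
    rw [Derivation.map_smul_of_tower, Derivation.leibniz, hX, derivative_Qseries,
      coeffwise_pperp_powerSumSeries]
    simp only [smul_eq_mul, smul_add, mul_smul, mul_smul_comm, smul_mul_assoc]
    rw [mul_left_comm, mul_comm (Qseries t)]

theorem pperp_coeff_X_pow_mul_Qseries (t : F) (s k n : ℕ) :
    pperpDerivation s.succPNat ((PowerSeries.X ^ k * Qseries t).coeff n) =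
      (1 - t ^ (s + 1)) • (PowerSeries.X ^ (k + (s + 1)) * Qseries t).coeff n := by
  rw [← coeff_coeffwiseDerivation, Derivation.leibniz, coeffwiseDerivation_X_pow, smul_zero,
    add_zero, coeffwise_pperp_Qseries, smul_eq_mul, mul_smul_comm, ← mul_assoc, ← pow_add,
    PowerSeries.coeff_smul]

theorem QstarSeries_Qcoef (q t : F) (n : ℕ) :
    QstarSeries q (Qcoef t n) = PowerSeries.mk fun m ↦
      (exchangeSeries q t).coeff m • (PowerSeries.X ^ m * Qseries t).coeff n := by
  refine eq_of_derivative_eq_derivationSeries ?_ (derivative_QstarSeries q _) ?_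
  · simp [QstarSeries, QstarOp, Qseries, constantCoeff_exchangeSeries]
  · ext1 m
    have hc := congrArg (PowerSeries.coeff m) (derivative_exchangeSeries q t)
    rw [PowerSeries.coeff_derivative, PowerSeries.coeff_mul] at hc
    rw [coeff_derivative_eq_smul F, PowerSeries.coeff_mk, coeff_derivationSeries, smul_smul,
      mul_comm, hc, sum_smul]
    refine sum_congr rfl fun x hx ↦ ?_
    have hdeg : x.2 + (x.1 + 1) = m + 1 := by have := mem_antidiagonal.mp hx; omega
    rw [PowerSeries.coeff_mk, PowerSeries.coeff_mk, Derivation.map_smul, Derivation.smul_apply,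
      pperp_coeff_X_pow_mul_Qseries, smul_smul, smul_smul, hdeg]
    congr 1
    ring

theorem QstarOp_Qcoef_mul (q t : F) (m n : ℕ) (f : MvPolynomial ℕ+ F) :
    QstarOp q m (Qcoef t n * f) = ∑ k ∈ range (m + 1), (exchangeSeries q t).coeff k •
      ((PowerSeries.X ^ k * Qseries t).coeff n * QstarOp q (m - k) f) := by
  have h := congrArg (PowerSeries.coeff m) (QstarSeries_mul q (Qcoef t n) f)
  rw [QstarSeries_Qcoef, PowerSeries.coeff_mul, Nat.sum_antidiagonal_eq_sum_range_succ_mk] at h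
  simpa only [QstarSeries, PowerSeries.coeff_mk, smul_mul_assoc] using h

theorem QstarOp_Qcoef_mul_sub (q t : F) (m n : ℕ) (f : MvPolynomial ℕ+ F) :
    QstarOp q m (Qcoef t n * f) - Qcoef t n * QstarOp q m f =
      ∑ k ∈ range (min m n), (exchangeSeries q t).coeff (k + 1) •
        (Qcoef t (n - (k + 1)) * QstarOp q (m - (k + 1)) f) := by
  have hsub : range (min m n) ⊆ range m := range_subset_range.mpr (min_le_left m n)
  rw [QstarOp_Qcoef_mul, sum_range_succ', ← sum_subset hsub]
  · rw [PowerSeries.coeff_zero_eq_constantCoeff_apply, constantCoeff_exchangeSeries,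
      pow_zero, one_mul, Qseries, PowerSeries.coeff_mk, one_smul, tsub_zero, add_sub_cancel_right]
    refine sum_congr rfl fun k hk ↦ ?_
    have hkn : k + 1 ≤ n := (lt_min_iff.mp (mem_range.mp hk)).2
    rw [PowerSeries.coeff_X_pow_mul', if_pos hkn, PowerSeries.coeff_mk]
  · intro k hk hk'
    have hnk : ¬ k + 1 ≤ n := by grind
    rw [PowerSeries.coeff_X_pow_mul', if_neg hnk, zero_mul, smul_zero]

end VertexOperators

/-- Appendix D of the paper: the commutation relation
`[Q_m^*, Q_n] = (1-q)(1-t) ∑_{i=1}^{min(m,n)} ∑_{j=0}^{min(m,n)-i} (qt)^j Q_{n-i-j} Q*_{m-i-j}`,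
where `Q_n` acts by multiplication. -/
theorem Qstar_Q_commutator (q t : F) (m n : ℕ) :
    QstarOp q m ∘ₗ mulOp (Qcoef t n) - mulOp (Qcoef t n) ∘ₗ QstarOp q m
      = ((1 - q) * (1 - t)) •
          ∑ i ∈ Finset.Icc 1 (min m n), ∑ j ∈ Finset.range (min m n - i + 1),
            ((q * t) ^ j) • (mulOp (Qcoef t (n - i - j)) ∘ₗ QstarOp q (m - i - j)) := by
  refine LinearMap.ext fun f ↦ ?_
  simp only [LinearMap.sub_apply, LinearMap.comp_apply, mulOp, LinearMap.mulLeft_apply,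
    LinearMap.smul_apply, LinearMap.sum_apply, Nat.sub_sub]
  rw [QstarOp_Qcoef_mul_sub, sum_Icc_sum_range_add (min m n)
    (fun k j ↦ (q * t) ^ j • (Qcoef t (n - k) * QstarOp q (m - k) f)), smul_sum]
  refine sum_congr rfl fun k _ ↦ ?_
  rw [coeff_succ_exchangeSeries, ← sum_smul, smul_smul]
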